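/- Let L be an ideal lattice and X a spectral space. Then the maps Σ : φ ↦ (x ↦ sup{c ∈ L : c compact and x ∉ φ(c)}) and Λ : f ↦ (a ↦ f⁻¹(D(a))) are mutually inverse bijections between the set of ideal-lattice morphisms φ : L → L_open(X) (where L_open(X) is the lattice of open subsets of X with multiplication given by intersection) and the set of continuous maps f : X → Spec L. -/

import Mathlib

open CompleteLattice TopologicalSpace

/-- An ideal lattice: a complete, compactly generated lattice with an associative
multiplication distributing over finite suprema, for which `⊤` is a compact
two-sided identity and products of compact elements are compact. -/
structure IsIdealLattice (α : Type*) [CompleteLattice α] [Mul α] : Prop where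
  mul_assoc : ∀ a b c : α, a * b * c = a * (b * c)
  compactlyGenerated : ∀ a : α, a = sSup {b : α | b ≤ a ∧ IsCompactElement b}
  mul_sup : ∀ a b c : α, a * (b ⊔ c) = a * b ⊔ a * c
  sup_mul : ∀ a b c : α, (a ⊔ b) * c = a * c ⊔ b * c
  top_compact : IsCompactElement (⊤ : α)
  top_mul : ∀ a : α, ⊤ * a = a
  mul_top : ∀ a : α, a * ⊤ = a
  compact_mul : ∀ a b : α, IsCompactElement a → IsCompactElement b → IsCompactElement (a * b)

/-- A prime element of an ideal lattice: `p ≠ ⊤` and `a * b ≤ p` implies `a ≤ p` or `b ≤ p`. -/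
def IsPrimeElt {α : Type*} [CompleteLattice α] [Mul α] (p : α) : Prop :=
  p ≠ ⊤ ∧ ∀ a b : α, a * b ≤ p → a ≤ p ∨ b ≤ p

/-- A semi-prime element of an ideal lattice: `b * b ≤ a` implies `b ≤ a`. -/
def IsSemiprimeElt {α : Type*} [CompleteLattice α] [Mul α] (a : α) : Prop :=
  ∀ b : α, b * b ≤ a → b ≤ a

/-- The prime spectrum of an ideal lattice: the set of prime elements. -/
def SpecL (α : Type*) [CompleteLattice α] [Mul α] : Type _ := {p : α // IsPrimeElt p}

/-- The Zariski-closed set `V(a) = {p ∈ Spec L : a ≤ p}`. -/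
def zV {α : Type*} [CompleteLattice α] [Mul α] (a : α) : Set (SpecL α) := {p | a ≤ p.1}

/-- The Zariski-open set `D(a) = {p ∈ Spec L : a ≰ p}`. -/
def zD {α : Type*} [CompleteLattice α] [Mul α] (a : α) : Set (SpecL α) := {p | ¬ a ≤ p.1}

/-- The Zariski topology on `SpecL α`: the open sets are exactly the sets `zD a`. -/
instance {α : Type*} [CompleteLattice α] [Mul α] : TopologicalSpace (SpecL α) :=
  TopologicalSpace.generateFrom {U : Set (SpecL α) | ∃ a : α, U = zD a}

/-- A morphism of ideal lattices: preserves arbitrary suprema, the top element and the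
multiplication. -/
def IsIdealLatticeHom {α β : Type*} [CompleteLattice α] [Mul α]
    [CompleteLattice β] [Mul β] (φ : α → β) : Prop :=
  (∀ A : Set α, φ (sSup A) = sSup (φ '' A)) ∧ φ ⊤ = ⊤ ∧ ∀ a b : α, φ (a * b) = φ a * φ b

/-- A spectral space: T0 and quasi-compact, the quasi-compact open subsets are closed
under finite intersections and form a basis of the topology, and every non-empty
irreducible closed subset has a generic point. -/
structure IsSpectralSpace (X : Type*) [TopologicalSpace X] : Prop where
  t0 : T0Space X
  compact : CompactSpace X
  inter : ∀ U V : Set X, IsOpen U → IsCompact U → IsOpen V → IsCompact V →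
    IsCompact (U ∩ V)
  basis : TopologicalSpace.IsTopologicalBasis {U : Set X | IsOpen U ∧ IsCompact U}
  sober : QuasiSober X

/-- The lattice of open subsets with multiplication given by intersection. -/
instance (X : Type*) [TopologicalSpace X] : Mul (Opens X) := ⟨fun U V => U ⊓ V⟩

namespace IsIdealLattice

variable {α : Type*} [CompleteLattice α] [Mul α]

lemma mul_le_left (hL : IsIdealLattice α) (a b : α) : a * b ≤ a := by
  have h := hL.mul_sup a b ⊤
  rw [sup_top_eq, hL.mul_top] at h
  exact le_sup_left.trans h.ge

lemma mul_le_right (hL : IsIdealLattice α) (a b : α) : a * b ≤ b := by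
  have h := hL.sup_mul a ⊤ b
  rw [sup_top_eq, hL.top_mul] at h
  exact le_sup_left.trans h.ge

end IsIdealLattice

section Spectrum

variable {α : Type*} [CompleteLattice α] [Mul α]

lemma isOpen_zD (a : α) : IsOpen (zD a) :=
  TopologicalSpace.isOpen_generateFrom_of_mem ⟨a, rfl⟩

lemma zD_top : zD (⊤ : α) = Set.univ :=
  Set.eq_univ_of_forall fun p h => p.2.1 (top_le_iff.mp h)

lemma zD_sSup (A : Set α) : zD (sSup A) = ⋃ a ∈ A, zD a := by
  ext p
  simp [zD, sSup_le_iff]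

lemma zD_mul (hL : IsIdealLattice α) (a b : α) : zD (a * b) = zD a ∩ zD b := by
  ext p
  constructor
  · exact fun h => ⟨fun ha => h ((hL.mul_le_left a b).trans ha),
      fun hb => h ((hL.mul_le_right a b).trans hb)⟩
  · exact fun ⟨ha, hb⟩ h => (p.2.2 a b h).elim ha hb

end Spectrum

section Adjunction

variable {α : Type*} [CompleteLattice α] [Mul α] {X : Type*} [TopologicalSpace X]

lemma coe_opens_mul (U V : Opens X) : ((U * V : Opens X) : Set X) = (U : Set X) ∩ V := rfl

/-- The largest element whose image under `φ` does not contain `x`. -/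
def primeAt (φ : α → Opens X) (x : X) : α :=
  sSup {c : α | IsCompactElement c ∧ x ∉ (φ c : Set X)}

namespace IsIdealLatticeHom

variable {φ : α → Opens X}

lemma mem_sSup_iff (hφ : IsIdealLatticeHom φ) (A : Set α) (x : X) :
    x ∈ φ (sSup A) ↔ ∃ a ∈ A, x ∈ φ a := by
  simp [hφ.1 A, Opens.mem_sSup]

lemma mem_of_le (hφ : IsIdealLatticeHom φ) {a b : α} (hab : a ≤ b) {x : X}
    (hx : x ∈ φ a) : x ∈ φ b := by
  have h : sSup {a, b} = b := by rw [sSup_pair, sup_eq_right.mpr hab]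
  rw [← h, hφ.mem_sSup_iff]
  exact ⟨a, Set.mem_insert _ _, hx⟩

lemma le_primeAt_iff (hL : IsIdealLattice α) (hφ : IsIdealLatticeHom φ) (a : α) (x : X) :
    a ≤ primeAt φ x ↔ x ∉ φ a := by
  constructor
  · intro h hx
    obtain ⟨c, hc, hxc⟩ := (hφ.mem_sSup_iff _ x).mp (hφ.mem_of_le h hx)
    exact hc.2 hxc
  · intro hx
    rw [hL.compactlyGenerated a]
    exact sSup_le fun c hc => le_sSup ⟨hc.2, fun h => hx (hφ.mem_of_le hc.1 h)⟩

lemma isPrimeElt_primeAt (hL : IsIdealLattice α) (hφ : IsIdealLatticeHom φ) (x : X) :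
    IsPrimeElt (primeAt φ x) := by
  refine ⟨fun h => (hφ.le_primeAt_iff hL ⊤ x).mp h.ge ?_, fun a b h => ?_⟩
  · rw [hφ.2.1]
    trivial
  · rw [hφ.le_primeAt_iff hL, hφ.2.2] at h
    rw [hφ.le_primeAt_iff hL, hφ.le_primeAt_iff hL, ← not_and_or]
    exact h

/-- The map `X → Spec L` attached to a morphism `L → L_open(X)`. -/
def toSpec (hL : IsIdealLattice α) (hφ : IsIdealLatticeHom φ) (x : X) : SpecL α :=
  ⟨primeAt φ x, hφ.isPrimeElt_primeAt hL x⟩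

lemma toSpec_preimage_zD (hL : IsIdealLattice α) (hφ : IsIdealLatticeHom φ) (a : α) :
    hφ.toSpec hL ⁻¹' zD a = φ a := by
  ext x
  exact (not_congr (hφ.le_primeAt_iff hL a x)).trans not_not

lemma continuous_toSpec (hL : IsIdealLattice α) (hφ : IsIdealLatticeHom φ) :
    Continuous (hφ.toSpec hL) := by
  refine continuous_generateFrom_iff.mpr ?_
  rintro _ ⟨a, rfl⟩
  rw [toSpec_preimage_zD]
  exact (φ a).isOpen

end IsIdealLatticeHom

/-- The map `a ↦ f⁻¹(D(a))` attached to a continuous map `f : X → Spec L`. -/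
def opensPreimage {f : X → SpecL α} (hf : Continuous f) (a : α) : Opens X :=
  ⟨f ⁻¹' zD a, (isOpen_zD a).preimage hf⟩

lemma isIdealLatticeHom_opensPreimage (hL : IsIdealLattice α) {f : X → SpecL α}
    (hf : Continuous f) : IsIdealLatticeHom (opensPreimage hf) := by
  refine ⟨fun A => ?_, ?_, fun a b => ?_⟩ <;> apply Opens.ext
  · rw [Opens.coe_sSup, Set.biUnion_image]
    simp [opensPreimage, zD_sSup]
  · simp [opensPreimage, zD_top]
  · simp [opensPreimage, zD_mul hL, coe_opens_mul]

lemma primeAt_opensPreimage (hL : IsIdealLattice α) {f : X → SpecL α}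
    (hf : Continuous f) (x : X) : primeAt (opensPreimage hf) x = (f x).1 :=
  eq_of_forall_le_iff fun a =>
    ((isIdealLatticeHom_opensPreimage hL hf).le_primeAt_iff hL a x).trans not_not

end Adjunction

/-- Adjunction: for an ideal lattice `L` and a spectral space `X`, the maps
`Σ : φ ↦ (x ↦ sup {c compact : x ∉ φ(c)})` and `Λ : f ↦ (a ↦ f⁻¹(D(a)))` are mutually
inverse bijections between ideal-lattice morphisms `L → L_open(X)` and continuous maps
`X → Spec L`. -/
theorem spec_adjunction {α : Type*} [CompleteLattice α] [Mul α]
    {X : Type*} [TopologicalSpace X] (hL : IsIdealLattice α) (hX : IsSpectralSpace X) :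
    ∃ (S : {φ : α → Opens X // IsIdealLatticeHom φ} → {f : X → SpecL α // Continuous f})
      (T : {f : X → SpecL α // Continuous f} → {φ : α → Opens X // IsIdealLatticeHom φ}),
      (∀ φ : {φ : α → Opens X // IsIdealLatticeHom φ}, ∀ x : X,
        ((S φ).1 x).1 = sSup {c : α | IsCompactElement c ∧ x ∉ (φ.1 c : Set X)}) ∧
      (∀ f : {f : X → SpecL α // Continuous f}, ∀ a : α,
        ((T f).1 a : Set X) = f.1 ⁻¹' zD a) ∧
      Function.LeftInverse T S ∧ Function.RightInverse T S := by
  refine ⟨fun φ => ⟨φ.2.toSpec hL, φ.2.continuous_toSpec hL⟩,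
    fun f => ⟨opensPreimage f.2, isIdealLatticeHom_opensPreimage hL f.2⟩,
    fun _ _ => rfl, fun _ _ => rfl, fun φ => ?_, fun f => ?_⟩
  · exact Subtype.ext (funext fun a => Opens.ext (φ.2.toSpec_preimage_zD hL a))
  · exact Subtype.ext (funext fun x => Subtype.ext (primeAt_opensPreimage hL f.2 x))
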